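/- Let Ω ⊆ ℝ^N be an open set with smooth boundary, let a : closure(Ω) → ℝ be continuous with a ≥ 0, and let Φ ∈ C²(closure(Ω)×[0,∞)) satisfy Φ > 0 and ∂_t Φ < 0 everywhere. Let u ∈ C²(closure(Ω)×[0,∞)) be real-valued, solve u_tt − Δu + a(x) u_t = 0 on Ω×(0,∞) with u(x,t) = 0 for x ∈ ∂Ω, and suppose that for every T > 0 there is R > 0 with supp u(·,t) ⊆ B(0,R) for all t ∈ [0,T]. Then for every t > 0: d/dt [ ∫_Ω ( |∇u|² + |u_t|² ) Φ dx ] = ∫_Ω (∂_t Φ)^{−1} | (∂_t Φ) ∇u − u_t ∇Φ |² dx + ∫_Ω ( −2 a(x) Φ + ∂_t Φ − (∂_t Φ)^{−1} |∇Φ|² ) |u_t|² dx, where ∇ denotes the gradient in the x-variables. -/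

import Mathlib

open MeasureTheory

noncomputable section

/-- The Laplacian `Δφ = ∑ᵢ ∂²φ/∂xᵢ²`. -/
def lap {N : ℕ} (φ : EuclideanSpace ℝ (Fin N) → ℝ) (x : EuclideanSpace ℝ (Fin N)) : ℝ :=
  ∑ i : Fin N, fderiv ℝ (fun z => fderiv ℝ φ z (EuclideanSpace.single i 1)) x
    (EuclideanSpace.single i 1)

/-- `Ω` has a smooth boundary: near every boundary point, `Ω` is the sublevel set of a
smooth local defining function with nonvanishing differential. -/
def HasSmoothBoundary {N : ℕ} (Ω : Set (EuclideanSpace ℝ (Fin N))) : Prop :=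
  ∀ x ∈ frontier Ω, ∃ (U : Set (EuclideanSpace ℝ (Fin N)))
    (f : EuclideanSpace ℝ (Fin N) → ℝ),
    IsOpen U ∧ x ∈ U ∧ ContDiff ℝ (⊤ : ℕ∞) f ∧ fderiv ℝ f x ≠ 0 ∧
      ∀ y ∈ U, (y ∈ Ω ↔ f y < 0)

/-!
Substituting the wave equation into the time derivative of `e = (|∇u|² + u_t²) Φ` and completing
the square in `∇u` gives the pointwise identity
`∂ₜe = 2 div (Φ u_t ∇u) + (∂ₜΦ)⁻¹ |∂ₜΦ ∇u - u_t ∇Φ|² + (-2aΦ + ∂ₜΦ - (∂ₜΦ)⁻¹ |∇Φ|²) u_t²` in `Ω`.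
The flux `Φ u_t ∇u` has compact support and vanishes on `∂Ω`, since `u = 0` there at all nearby
times, so its divergence integrates to zero.
-/

open Set Filter Topology Function
open scoped Gradient Laplacian RealInnerProductSpace

section Frontier

theorem inter_frontier_nonempty_of_isPreconnected {X : Type*} [TopologicalSpace X] {s A : Set X}
    (hs : IsPreconnected s) (hA : (s ∩ A).Nonempty) (hA' : (s ∩ Aᶜ).Nonempty) :
    (s ∩ frontier A).Nonempty := by
  by_contra h
  have hcover : s ⊆ interior A ∪ interior Aᶜ := fun z hz => by
    by_contra hz'
    rw [← mem_compl_iff, compl_union, interior_compl, compl_compl] at hz'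
    exact h ⟨z, hz, hz'.2, hz'.1⟩
  have hdisj : Disjoint (interior A) (interior Aᶜ) :=
    disjoint_compl_right.mono interior_subset interior_subset
  obtain ⟨x, hxs, hxA⟩ := hA
  obtain ⟨y, hys, hyA⟩ := hA'
  have hx : x ∈ interior A :=
    (hcover hxs).resolve_right fun hx => interior_subset hx hxA
  exact hyA (interior_subset (hs.subset_left_of_subset_union isOpen_interior isOpen_interior
    hdisj hcover ⟨x, hxs, hx⟩ hys))

theorem lipschitzWith_indicator_of_frontier {E F : Type*} [NormedAddCommGroup E]
    [NormedSpace ℝ E] [NormedAddCommGroup F] {Ω : Set E} {G : E → F} {C : NNReal}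
    (hG : LipschitzWith C G) (h0 : ∀ x ∈ frontier Ω, G x = 0) :
    LipschitzWith C (Ω.indicator G) := by
  have norm_le_of_crossing : ∀ x ∈ Ω, ∀ y ∉ Ω, ‖G x‖ ≤ C * dist x y := by
    intro x hx y hy
    obtain ⟨z, hz, hzΩ⟩ := inter_frontier_nonempty_of_isPreconnected
      (convex_segment (𝕜 := ℝ) x y).isPreconnected
      ⟨x, left_mem_segment ℝ x y, hx⟩ ⟨y, right_mem_segment ℝ x y, hy⟩
    calc ‖G x‖ = dist (G x) (G z) := by rw [h0 z hzΩ, dist_zero_right]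
      _ ≤ C * dist x z := hG.dist_le_mul x z
      _ ≤ C * dist x y := by
        gcongr
        linarith [dist_add_dist_of_mem_segment hz, dist_nonneg (x := z) (y := y)]
  refine LipschitzWith.of_dist_le_mul fun x y => ?_
  by_cases hx : x ∈ Ω <;> by_cases hy : y ∈ Ω
  · simpa [hx, hy] using hG.dist_le_mul x y
  · simpa [hx, hy] using norm_le_of_crossing x hx y hy
  · simpa [hx, hy, dist_comm] using norm_le_of_crossing y hy x hx
  · simpa [hx, hy] using mul_nonneg C.2 dist_nonneg

end Frontier

section VanishingIntegrals

variable {E : Type*} [NormedAddCommGroup E] [NormedSpace ℝ E] [FiniteDimensional ℝ E]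
  [MeasurableSpace E] [BorelSpace E] (μ : Measure E) [μ.IsAddHaarMeasure]

theorem ae_fderiv_eq_zero_of_eqOn_zero {w : E → ℝ} {S : Set E} (hS : MeasurableSet S)
    (h0 : EqOn w 0 S) : ∀ᵐ x ∂μ, x ∈ S → fderiv ℝ w x = 0 := by
  rcases subsingleton_or_nontrivial E with _ | _
  · exact .of_forall fun x _ => Subsingleton.elim _ _
  obtain ⟨v, hv⟩ := exists_ne (0 : E)
  let D : Set E := S ∩ {x | DifferentiableAt ℝ w x}
  have hD : MeasurableSet D := hS.inter (measurableSet_of_differentiableAt ℝ w)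
  -- `ApproximatesLinearOn.norm_fderiv_sub_le` only covers maps `E → E`, hence the factor `v`.
  have happrox : ApproximatesLinearOn (fun x => w x • v) (0 : E →L[ℝ] E) D 0 := by
    intro x hx y hy
    simp [h0 hx.1, h0 hy.1]
  have hzero := happrox.norm_fderiv_sub_le μ hD (fun x => (fderiv ℝ w x).smulRight v)
    fun x hx => (hx.2.hasFDerivAt.smul_const v).hasFDerivWithinAt
  rw [ae_restrict_iff' hD] at hzero
  filter_upwards [hzero] with x hx hxS
  by_cases hdiff : DifferentiableAt ℝ w x
  · simpa [hv] using hx ⟨hxS, hdiff⟩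
  · exact fderiv_zero_of_not_differentiableAt hdiff

theorem integral_lineDeriv_eq_zero {w : E → ℝ} {C : NNReal} (hw : LipschitzWith C w)
    (hc : HasCompactSupport w) (v : E) : ∫ x, lineDeriv ℝ w x v ∂μ = 0 := by
  simpa [lineDeriv] using
    ((LipschitzWith.const (1 : ℝ)).integral_lineDeriv_mul_eq (μ := μ) hw hc (-v)).symm

/- No regularity of `∂Ω` is needed: the extension of `G` by zero is Lipschitz, and its derivative
is almost everywhere that of `G` in `Ω` and zero outside. -/
theorem setIntegral_fderiv_apply_eq_zero {Ω : Set E} (hΩ : IsOpen Ω) {G : E → ℝ}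
    (hG : ContDiff ℝ 1 G) (hc : HasCompactSupport G) (h0 : ∀ x ∈ frontier Ω, G x = 0) (v : E) :
    ∫ x in Ω, fderiv ℝ G x v ∂μ = 0 := by
  obtain ⟨C, hC⟩ := ContDiff.lipschitzWith_of_hasCompactSupport hc hG one_ne_zero
  have hw : LipschitzWith C (Ω.indicator G) := lipschitzWith_indicator_of_frontier hC h0
  have hwc : HasCompactSupport (Ω.indicator G) := hc.mono (by simp [support_indicator])
  rw [← integral_indicator hΩ.measurableSet, ← integral_lineDeriv_eq_zero μ hw hwc v]
  refine integral_congr_ae ?_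
  filter_upwards [hw.ae_differentiableAt (μ := μ), ae_fderiv_eq_zero_of_eqOn_zero μ
    hΩ.measurableSet.compl fun x hx => indicator_of_notMem hx G] with x hdiff hzero
  rw [hdiff.lineDeriv_eq_fderiv]
  by_cases hx : x ∈ Ω
  · rw [indicator_of_mem hx, ((eqOn_indicator (f := G)).eventuallyEq_of_mem
      (hΩ.mem_nhds hx)).fderiv_eq]
  · rw [indicator_of_notMem hx, hzero hx, zero_apply]

end VanishingIntegrals

section Divergence

variable {E : Type*} [NormedAddCommGroup E] [InnerProductSpace ℝ E]

/-- The divergence of a vector field `X` on a finite-dimensional real inner product space, encoded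
as the trace of the derivative of `X`. -/
def divergence (X : E → E) (x : E) : ℝ :=
  LinearMap.trace ℝ E (fderiv ℝ X x)

theorem divergence_eq_sum_fderiv_inner {ι : Type*} [Fintype ι] (b : OrthonormalBasis ι ℝ E)
    {X : E → E} {x : E} (hX : DifferentiableAt ℝ X x) :
    divergence X x = ∑ i, fderiv ℝ (fun y => ⟪b i, X y⟫) x (b i) := by
  rw [divergence, LinearMap.trace_eq_sum_inner _ b]
  refine Finset.sum_congr rfl fun i _ => ?_
  simp [fderiv_inner_apply ℝ (differentiableAt_const (b i)) hX]

theorem hasCompactSupport_divergence {X : E → E} (hX : HasCompactSupport X) :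
    HasCompactSupport (divergence X) :=
  (hX.fderiv ℝ).comp_left (g := fun T : E →L[ℝ] E => LinearMap.trace ℝ E T) (by simp)

theorem contDiff_gradient [CompleteSpace E] {f : E → ℝ} {m n : WithTop ℕ∞} (hf : ContDiff ℝ n f)
    (hmn : m + 1 ≤ n) : ContDiff ℝ m (∇ f) :=
  (InnerProductSpace.toDual ℝ E).symm.contDiff.comp (hf.fderiv_right hmn)

variable [FiniteDimensional ℝ E]

theorem divergence_smul {φ : E → ℝ} {X : E → E} {x : E} (hφ : DifferentiableAt ℝ φ x)
    (hX : DifferentiableAt ℝ X x) :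
    divergence (fun y => φ y • X y) x = φ x * divergence X x + ⟪∇ φ x, X x⟫ := by
  rw [divergence, fderiv_fun_smul hφ hX]
  simp [divergence]

theorem continuous_divergence {X : E → E} (hX : ContDiff ℝ 1 X) : Continuous (divergence X) :=
  (LinearMap.trace ℝ E ∘ₗ ContinuousLinearMap.coeLM ℝ).continuous_of_finiteDimensional.comp
    (hX.continuous_fderiv one_ne_zero)

theorem laplacian_eq_sum_fderiv_fderiv {ι : Type*} [Fintype ι] (b : OrthonormalBasis ι ℝ E)
    {f : E → ℝ} (hf : ContDiff ℝ 2 f) (x : E) :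
    Δ f x = ∑ i, fderiv ℝ (fun y => fderiv ℝ f y (b i)) x (b i) := by
  have hdf : Differentiable ℝ (fderiv ℝ f) :=
    (hf.fderiv_right one_add_one_eq_two.le).differentiable one_ne_zero
  simp [InnerProductSpace.laplacian_eq_iteratedFDeriv_orthonormalBasis f b,
    iteratedFDeriv_two_apply, fderiv_clm_apply (hdf x) (differentiableAt_const _)]

theorem divergence_gradient {f : E → ℝ} (hf : ContDiff ℝ 2 f) (x : E) :
    divergence (∇ f) x = Δ f x := by
  rw [laplacian_eq_sum_fderiv_fderiv (stdOrthonormalBasis ℝ E) hf,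
    divergence_eq_sum_fderiv_inner (stdOrthonormalBasis ℝ E)
      ((contDiff_gradient hf one_add_one_eq_two.le).differentiable one_ne_zero x)]
  simp

theorem setIntegral_divergence_eq_zero [MeasurableSpace E] [BorelSpace E] (μ : Measure E)
    [μ.IsAddHaarMeasure] {Ω : Set E} (hΩ : IsOpen Ω) {X : E → E} (hX : ContDiff ℝ 1 X)
    (hc : HasCompactSupport X) (h0 : ∀ x ∈ frontier Ω, X x = 0) :
    ∫ x in Ω, divergence X x ∂μ = 0 := by
  let b := stdOrthonormalBasis ℝ E
  have hcoord : ∀ i, ContDiff ℝ 1 fun y => ⟪b i, X y⟫ := fun i => contDiff_const.inner ℝ hX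
  have hcoordc : ∀ i, HasCompactSupport fun y => ⟪b i, X y⟫ := fun i =>
    hc.comp_left (g := fun z => ⟪b i, z⟫) (inner_zero_right _)
  have hint : ∀ i, Integrable (fun x => fderiv ℝ (fun y => ⟪b i, X y⟫) x (b i)) (μ.restrict Ω) :=
    fun i => (((hcoord i).continuous_fderiv one_ne_zero).clm_apply
      continuous_const).integrable_of_hasCompactSupport ((hcoordc i).fderiv_apply ℝ _)
  simp only [divergence_eq_sum_fderiv_inner b (hX.differentiable one_ne_zero _)]
  rw [integral_finsetSum _ fun i _ => hint i]
  exact Finset.sum_eq_zero fun i _ => setIntegral_fderiv_apply_eq_zero μ hΩ (hcoord i) (hcoordc i)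
    (fun x hx => by rw [h0 x hx, inner_zero_right]) (b i)

theorem lap_eq_laplacian {N : ℕ} {φ : EuclideanSpace ℝ (Fin N) → ℝ} (hφ : ContDiff ℝ 2 φ)
    (x : EuclideanSpace ℝ (Fin N)) : lap φ x = Δ φ x := by
  simp [lap, laplacian_eq_sum_fderiv_fderiv (EuclideanSpace.basisFun (Fin N) ℝ) hφ]

end Divergence

theorem deriv_eq_zero_of_notMem {X F : Type*} [NormedAddCommGroup F] [NormedSpace ℝ F]
    {f : X → ℝ → F} {K : Set X} {t : ℝ} (hf : ∀ᶠ s in 𝓝 t, ∀ x ∉ K, f x s = 0) {x : X}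
    (hx : x ∉ K) : deriv (f x) t = 0 := by
  have hzero : f x =ᶠ[𝓝 t] fun _ => 0 := hf.mono fun s hs => hs x hx
  rw [hzero.deriv_eq, deriv_const]

section TimeDependent

variable {E F : Type*} [NormedAddCommGroup E] [NormedSpace ℝ E] [NormedAddCommGroup F]
  [NormedSpace ℝ F] {f : E → ℝ → F} {m n : WithTop ℕ∞}

theorem contDiff_of_uncurry_right (hf : ContDiff ℝ n (uncurry f)) (t : ℝ) :
    ContDiff ℝ n fun x => f x t :=
  hf.comp (contDiff_id.prodMk contDiff_const)

theorem contDiff_of_uncurry_left (hf : ContDiff ℝ n (uncurry f)) (x : E) : ContDiff ℝ n (f x) :=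
  hf.comp (contDiff_const.prodMk contDiff_id)

theorem contDiff_uncurry_deriv (hf : ContDiff ℝ n (uncurry f)) (hmn : m + 1 ≤ n) :
    ContDiff ℝ m (uncurry fun x t => deriv (f x) t) :=
  (ContDiff.fderiv (f := fun (p : E × ℝ) s => f p.1 s)
    (hf.comp ((contDiff_fst.comp contDiff_fst).prodMk contDiff_snd)) contDiff_snd hmn).clm_apply
    contDiff_const

theorem contDiff_uncurry_fderiv (hf : ContDiff ℝ n (uncurry f)) (hmn : m + 1 ≤ n) :
    ContDiff ℝ m (uncurry fun x t => fderiv ℝ (fun y => f y t) x) :=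
  ContDiff.fderiv (f := fun (p : E × ℝ) y => f y p.2)
    (hf.comp (contDiff_snd.prodMk (contDiff_snd.comp contDiff_fst))) contDiff_fst hmn

theorem hasDerivAt_fderiv (hf : ContDiff ℝ 2 (uncurry f)) (x : E) (t : ℝ) :
    HasDerivAt (fun s => fderiv ℝ (fun y => f y s) x) (fderiv ℝ (fun y => deriv (f y) t) x) t := by
  have hdiff : Differentiable ℝ (uncurry f) := hf.differentiable two_ne_zero
  have hdiff' : Differentiable ℝ (fderiv ℝ (uncurry f)) :=
    (hf.fderiv_right one_add_one_eq_two.le).differentiable one_ne_zero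
  have htime : ∀ y s, HasDerivAt (fun r : ℝ => (y, r)) ((0, 1) : E × ℝ) s := fun y s =>
    (hasDerivAt_const s y).prodMk (hasDerivAt_id s)
  have hspace : ∀ y s, HasFDerivAt (fun z : E => (z, s)) (.inl ℝ E ℝ) y := fun y s =>
    hasFDerivAt_prodMk_left y s
  have hfderiv : ∀ y s,
      fderiv ℝ (fun z => f z s) y = (fderiv ℝ (uncurry f) (y, s)).comp (.inl ℝ E ℝ) := fun y s =>
    (HasFDerivAt.comp (g := uncurry f) y (hdiff (y, s)).hasFDerivAt (hspace y s)).fderiv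
  have hderiv : ∀ y s, deriv (f y) s = fderiv ℝ (uncurry f) (y, s) (0, 1) := fun y s =>
    ((hdiff (y, s)).hasFDerivAt.comp_hasDerivAt s (htime y s)).deriv
  simp only [hfderiv, hderiv]
  have hleft := ((hdiff' (x, t)).hasFDerivAt.comp_hasDerivAt t (htime x t)).clm_comp
    (hasDerivAt_const t (.inl ℝ E ℝ))
  have hright : HasFDerivAt (fun y => fderiv ℝ (uncurry f) (y, t) (0, 1)) _ x :=
    ((hdiff' (x, t)).hasFDerivAt.comp x (hspace x t)).clm_apply (hasFDerivAt_const (0, 1) x)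
  have hsymm : IsSymmSndFDerivAt ℝ (uncurry f) (x, t) := hf.contDiffAt.isSymmSndFDerivAt (by simp)
  refine hleft.congr_deriv (ContinuousLinearMap.ext fun v => ?_)
  rw [hright.fderiv]
  simp [hsymm.eq (0, 1) (v, 0)]

end TimeDependent

section TimeDependentGradient

variable {E : Type*} [NormedAddCommGroup E] [InnerProductSpace ℝ E] [CompleteSpace E]
  {f : E → ℝ → ℝ} {m n : WithTop ℕ∞}

theorem contDiff_uncurry_gradient (hf : ContDiff ℝ n (uncurry f)) (hmn : m + 1 ≤ n) :
    ContDiff ℝ m (uncurry fun x t => ∇ (fun y => f y t) x) :=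
  (InnerProductSpace.toDual ℝ E).symm.contDiff.comp (contDiff_uncurry_fderiv hf hmn)

theorem hasDerivAt_gradient (hf : ContDiff ℝ 2 (uncurry f)) (x : E) (t : ℝ) :
    HasDerivAt (fun s => ∇ (fun y => f y s) x) (∇ (fun y => deriv (f y) t) x) t :=
  (InnerProductSpace.toDual ℝ E).symm.toContinuousLinearEquiv.hasFDerivAt.comp_hasDerivAt t
    (hasDerivAt_fderiv hf x t)

theorem gradient_eq_zero_of_notMem {g : E → ℝ} {K : Set E} (hK : IsClosed K)
    (hg : ∀ x ∉ K, g x = 0) {x : E} (hx : x ∉ K) : ∇ g x = 0 := by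
  have hzero : g =ᶠ[𝓝 x] fun _ => 0 := eventually_of_mem (hK.isOpen_compl.mem_nhds hx) hg
  rw [gradient, hzero.fderiv_eq, fderiv_fun_const, Pi.zero_apply, map_zero]

end TimeDependentGradient

section Integration

variable {X F : Type*} [TopologicalSpace X] [T2Space X] [MeasurableSpace X] [BorelSpace X]
  [NormedAddCommGroup F] {μ : Measure X} [IsFiniteMeasureOnCompacts μ] {K : Set X}

theorem integrableOn_of_continuousOn_closure {Ω : Set X} (hΩ : MeasurableSet Ω) (hK : IsCompact K)
    {f : X → F} (hf : ContinuousOn f (closure Ω)) (h0 : ∀ x ∉ K, f x = 0) :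
    IntegrableOn f Ω μ := by
  have hcompact : IntegrableOn f (closure Ω ∩ K) μ :=
    (hf.mono inter_subset_left).integrableOn_compact' (hK.inter_left isClosed_closure)
      (isClosed_closure.measurableSet.inter hK.measurableSet)
  exact hcompact.of_forall_sdiff_eq_zero hΩ fun x hx =>
    h0 x fun hxK => hx.2 ⟨subset_closure hx.1, hxK⟩

theorem hasDerivAt_integral_of_continuous_of_compact [NormedSpace ℝ F]
    [SecondCountableTopologyEither X F] {f f' : X → ℝ → F} (hf : Continuous (uncurry f))
    (hf' : Continuous (uncurry f')) (hderiv : ∀ x s, HasDerivAt (f x) (f' x s) s)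
    (hK : IsCompact K) {t : ℝ} (h0 : ∀ᶠ s in 𝓝 t, ∀ x ∉ K, f x s = 0) :
    HasDerivAt (fun s => ∫ x, f x s ∂μ) (∫ x, f' x t ∂μ) t := by
  obtain ⟨ε, hε, hzero⟩ := Metric.nhds_basis_closedBall.mem_iff.1 h0.eventually_nhds
  obtain ⟨C, hC⟩ := (hK.prod (isCompact_closedBall t ε)).exists_bound_of_continuousOn
    hf'.continuousOn
  have hzero' : ∀ s ∈ Metric.closedBall t ε, ∀ x ∉ K, f' x s = 0 := fun s hs x hx => by
    rw [← (hderiv x s).deriv, deriv_eq_zero_of_notMem (hzero hs) hx]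
  have hbound : ∀ x, ∀ s ∈ Metric.closedBall t ε, ‖f' x s‖ ≤ K.indicator (fun _ => C) x :=
    fun x s hs => by
      by_cases hx : x ∈ K
      · simpa [hx] using hC (x, s) ⟨hx, hs⟩
      · simp [hx, hzero' s hs x hx]
  have hbound_int : Integrable (K.indicator fun _ => C) μ :=
    (integrable_indicator_iff hK.measurableSet).2 (integrableOn_const hK.measure_lt_top.ne)
  exact (hasDerivAt_integral_of_dominated_loc_of_deriv_le (F := fun s x => f x s)
    (F' := fun s x => f' x s) (Metric.closedBall_mem_nhds t hε)
    (.of_forall fun s => (hf.uncurry_right s).aestronglyMeasurable)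
    ((hf.uncurry_right t).integrable_of_hasCompactSupport (.intro hK h0.self_of_nhds))
    (hf'.uncurry_right t).aestronglyMeasurable (.of_forall hbound) hbound_int
    (.of_forall fun x s _ => hderiv x s)).2

end Integration

section Energy

variable {E : Type*} [NormedAddCommGroup E] [InnerProductSpace ℝ E]

/-- The energy density `(|∇u|² + u_t²) Φ` of the wave `u` at position `x` and time `t`, with
weight `Φ`. Like `Φ` and `u`, it is curried with the space variable first. -/
def energyDensity [CompleteSpace E] (Φ u : E → ℝ → ℝ) (x : E) (t : ℝ) : ℝ :=
  (‖∇ (fun y => u y t) x‖ ^ 2 + deriv (u x) t ^ 2) * Φ x t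

/-- The energy flux `Φ u_t ∇u` at time `t`, a vector field on space. -/
def energyFlux [CompleteSpace E] (Φ u : E → ℝ → ℝ) (t : ℝ) (x : E) : E :=
  (Φ x t * deriv (u x) t) • ∇ (fun y => u y t) x

theorem inv_mul_norm_smul_sub_smul_sq {c : ℝ} (hc : c ≠ 0) (d : ℝ) (p q : E) :
    c⁻¹ * ‖c • p - d • q‖ ^ 2 = c * ‖p‖ ^ 2 - 2 * d * ⟪q, p⟫ + c⁻¹ * ‖q‖ ^ 2 * d ^ 2 := by
  rw [norm_sub_sq_real, norm_smul, norm_smul, real_inner_smul_left, real_inner_smul_right,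
    mul_pow, mul_pow, Real.norm_eq_abs, Real.norm_eq_abs, sq_abs, sq_abs, real_inner_comm]
  field_simp

section Complete

variable [CompleteSpace E] {Φ u : E → ℝ → ℝ} {t : ℝ}

theorem contDiff_energyDensity (hΦ : ContDiff ℝ 1 (uncurry Φ)) (hu : ContDiff ℝ 2 (uncurry u)) :
    ContDiff ℝ 1 (uncurry (energyDensity Φ u)) :=
  (((contDiff_uncurry_gradient hu one_add_one_eq_two.le).norm_sq ℝ).add
    ((contDiff_uncurry_deriv hu one_add_one_eq_two.le).pow 2)).mul hΦ

theorem contDiff_energyFlux (hΦ : ContDiff ℝ 1 (uncurry Φ)) (hu : ContDiff ℝ 2 (uncurry u)) :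
    ContDiff ℝ 1 (energyFlux Φ u t) :=
  ((contDiff_of_uncurry_right hΦ t).mul
    (contDiff_of_uncurry_right (contDiff_uncurry_deriv hu one_add_one_eq_two.le) t)).smul
    (contDiff_of_uncurry_right (contDiff_uncurry_gradient hu one_add_one_eq_two.le) t)

theorem hasCompactSupport_energyFlux {K : Set E} (hK : IsCompact K)
    (hsupp : ∀ x ∉ K, u x t = 0) : HasCompactSupport (energyFlux Φ u t) :=
  .intro hK fun x hx => by
    rw [energyFlux, gradient_eq_zero_of_notMem hK.isClosed hsupp hx, smul_zero]

theorem hasDerivAt_energyDensity {x : E} (hΦ : DifferentiableAt ℝ (Φ x) t)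
    (hu : ContDiff ℝ 2 (uncurry u)) :
    HasDerivAt (energyDensity Φ u x)
      (2 * (⟪∇ (fun y => u y t) x, ∇ (fun y => deriv (u y) t) x⟫
          + deriv (u x) t * deriv (deriv (u x)) t) * Φ x t
        + (‖∇ (fun y => u y t) x‖ ^ 2 + deriv (u x) t ^ 2) * deriv (Φ x) t) t := by
  have hut : HasDerivAt (deriv (u x)) (deriv (deriv (u x)) t) t :=
    ((contDiff_of_uncurry_left (contDiff_uncurry_deriv hu one_add_one_eq_two.le) x).differentiable
      one_ne_zero t).hasDerivAt
  refine (((hasDerivAt_gradient hu x t).norm_sq.fun_add (hut.fun_pow 2)).fun_mul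
    hΦ.hasDerivAt).congr_deriv ?_
  push_cast
  ring

end Complete

variable [FiniteDimensional ℝ E] {Φ u : E → ℝ → ℝ} {t : ℝ}

theorem divergence_energyFlux (hΦ : ContDiff ℝ 1 (uncurry Φ)) (hu : ContDiff ℝ 2 (uncurry u))
    (x : E) :
    divergence (energyFlux Φ u t) x
      = Φ x t * deriv (u x) t * Δ (fun y => u y t) x
        + Φ x t * ⟪∇ (fun y => u y t) x, ∇ (fun y => deriv (u y) t) x⟫
        + deriv (u x) t * ⟪∇ (fun y => Φ y t) x, ∇ (fun y => u y t) x⟫ := by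
  have hΦx : DifferentiableAt ℝ (fun y => Φ y t) x :=
    (contDiff_of_uncurry_right hΦ t).differentiable one_ne_zero x
  have hutx : DifferentiableAt ℝ (fun y => deriv (u y) t) x :=
    (contDiff_of_uncurry_right (contDiff_uncurry_deriv hu one_add_one_eq_two.le) t).differentiable
      one_ne_zero x
  have hux : ContDiff ℝ 2 fun y => u y t := contDiff_of_uncurry_right hu t
  have hgrad : DifferentiableAt ℝ (∇ fun y => u y t) x :=
    (contDiff_gradient hux one_add_one_eq_two.le).differentiable one_ne_zero x
  have hgrad_mul : ∇ (fun y => Φ y t * deriv (u y) t) x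
      = Φ x t • ∇ (fun y => deriv (u y) t) x + deriv (u x) t • ∇ (fun y => Φ y t) x := by
    simp only [gradient, fderiv_fun_mul hΦx hutx, map_add, map_smul]
  unfold energyFlux
  rw [divergence_smul (hΦx.fun_mul hutx) hgrad, divergence_gradient hux, hgrad_mul,
    inner_add_left, real_inner_smul_left, real_inner_smul_left,
    real_inner_comm (∇ (fun y => u y t) x), add_assoc]

theorem deriv_energyDensity_eq (hΦ : ContDiff ℝ 1 (uncurry Φ)) (hu : ContDiff ℝ 2 (uncurry u))
    {x : E} {α : ℝ} (hΦt : deriv (Φ x) t ≠ 0)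
    (hwave : deriv (deriv (u x)) t - Δ (fun y => u y t) x + α * deriv (u x) t = 0) :
    deriv (energyDensity Φ u x) t
      = 2 * divergence (energyFlux Φ u t) x
        + ((deriv (Φ x) t)⁻¹ * ‖deriv (Φ x) t • ∇ (fun y => u y t) x
            - deriv (u x) t • ∇ (fun y => Φ y t) x‖ ^ 2
          + (-2 * α * Φ x t + deriv (Φ x) t
            - (deriv (Φ x) t)⁻¹ * ‖∇ (fun y => Φ y t) x‖ ^ 2) * deriv (u x) t ^ 2) := by
  have hutt : deriv (deriv (u x)) t = Δ (fun y => u y t) x - α * deriv (u x) t := by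
    linear_combination hwave
  rw [(hasDerivAt_energyDensity ((contDiff_of_uncurry_left hΦ x).differentiable one_ne_zero t)
    hu).deriv, divergence_energyFlux hΦ hu, inv_mul_norm_smul_sub_smul_sq hΦt, hutt]
  ring

theorem eventually_energyDensity_eq_zero {K : Set E} (hK : IsClosed K)
    (hsupp : ∀ᶠ s in 𝓝 t, ∀ x ∉ K, u x s = 0) :
    ∀ᶠ s in 𝓝 t, ∀ x ∉ K, energyDensity Φ u x s = 0 := by
  filter_upwards [hsupp.eventually_nhds] with s hs x hx
  simp [energyDensity, deriv_eq_zero_of_notMem hs hx,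
    gradient_eq_zero_of_notMem hK hs.self_of_nhds hx]

variable [MeasurableSpace E] [BorelSpace E] {Ω : Set E} {K : Set E}

theorem hasDerivAt_setIntegral_energyDensity (μ : Measure E) [IsFiniteMeasureOnCompacts μ]
    (hΦ : ContDiff ℝ 1 (uncurry Φ)) (hu : ContDiff ℝ 2 (uncurry u)) (hK : IsCompact K)
    (hsupp : ∀ᶠ s in 𝓝 t, ∀ x ∉ K, u x s = 0) :
    HasDerivAt (fun s => ∫ x in Ω, energyDensity Φ u x s ∂μ)
      (∫ x in Ω, deriv (energyDensity Φ u x) t ∂μ) t := by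
  have hcont : ContDiff ℝ 1 (uncurry (energyDensity Φ u)) := contDiff_energyDensity hΦ hu
  exact hasDerivAt_integral_of_continuous_of_compact hcont.continuous
    (contDiff_uncurry_deriv hcont (zero_add 1).le).continuous
    (fun x s => ((contDiff_of_uncurry_left hcont x).differentiable one_ne_zero s).hasDerivAt)
    hK (eventually_energyDensity_eq_zero hK.isClosed hsupp)

theorem integrableOn_inv_mul_norm_smul_sub_smul_sq (μ : Measure E) [IsFiniteMeasureOnCompacts μ]
    (hΩ : MeasurableSet Ω) (hΦ : ContDiff ℝ 1 (uncurry Φ))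
    (hΦt : ∀ x ∈ closure Ω, deriv (Φ x) t ≠ 0) (hu : ContDiff ℝ 1 (uncurry u)) (hK : IsCompact K)
    (hsupp : ∀ᶠ s in 𝓝 t, ∀ x ∉ K, u x s = 0) :
    IntegrableOn (fun x => (deriv (Φ x) t)⁻¹ * ‖deriv (Φ x) t • ∇ (fun y => u y t) x
      - deriv (u x) t • ∇ (fun y => Φ y t) x‖ ^ 2) Ω μ := by
  have hΦt_cont := (contDiff_uncurry_deriv hΦ (zero_add 1).le).continuous.uncurry_right t
  have hut_cont := (contDiff_uncurry_deriv hu (zero_add 1).le).continuous.uncurry_right t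
  have hgradΦ_cont := (contDiff_uncurry_gradient hΦ (zero_add 1).le).continuous.uncurry_right t
  have hgradu_cont := (contDiff_uncurry_gradient hu (zero_add 1).le).continuous.uncurry_right t
  refine integrableOn_of_continuousOn_closure hΩ hK ((hΦt_cont.continuousOn.inv₀ hΦt).mul
    (((hΦt_cont.smul hgradu_cont).sub (hut_cont.smul hgradΦ_cont)).norm.pow 2).continuousOn)
    fun x hx => ?_
  simp [deriv_eq_zero_of_notMem hsupp hx,
    gradient_eq_zero_of_notMem hK.isClosed hsupp.self_of_nhds hx]

theorem integrableOn_mul_deriv_sq (μ : Measure E) [IsFiniteMeasureOnCompacts μ]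
    (hΩ : MeasurableSet Ω) {a : E → ℝ} (ha : ContinuousOn a (closure Ω))
    (hΦ : ContDiff ℝ 1 (uncurry Φ)) (hΦt : ∀ x ∈ closure Ω, deriv (Φ x) t ≠ 0)
    (hu : ContDiff ℝ 1 (uncurry u)) (hK : IsCompact K)
    (hsupp : ∀ᶠ s in 𝓝 t, ∀ x ∉ K, u x s = 0) :
    IntegrableOn (fun x => (-2 * a x * Φ x t + deriv (Φ x) t
      - (deriv (Φ x) t)⁻¹ * ‖∇ (fun y => Φ y t) x‖ ^ 2) * deriv (u x) t ^ 2) Ω μ := by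
  have hΦ_cont := (hΦ.continuous.uncurry_right t).continuousOn (s := closure Ω)
  have hΦt_cont := ((contDiff_uncurry_deriv hΦ (zero_add 1).le).continuous.uncurry_right
    t).continuousOn (s := closure Ω)
  have hut_cont := (contDiff_uncurry_deriv hu (zero_add 1).le).continuous.uncurry_right t
  have hgradΦ_cont := (contDiff_uncurry_gradient hΦ (zero_add 1).le).continuous.uncurry_right t
  refine integrableOn_of_continuousOn_closure hΩ hK
    (((((continuousOn_const.mul ha).mul hΦ_cont).add hΦt_cont).sub
      ((hΦt_cont.inv₀ hΦt).mul (hgradΦ_cont.norm.pow 2).continuousOn)).mul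
      (hut_cont.pow 2).continuousOn) fun x hx => ?_
  simp [deriv_eq_zero_of_notMem hsupp hx]

theorem setIntegral_divergence_energyFlux_eq_zero (μ : Measure E) [μ.IsAddHaarMeasure]
    (hΩ : IsOpen Ω) (hΦ : ContDiff ℝ 1 (uncurry Φ)) (hu : ContDiff ℝ 2 (uncurry u))
    (hK : IsCompact K) (hsupp : ∀ x ∉ K, u x t = 0)
    (hbdry : ∀ x ∈ frontier Ω, deriv (u x) t = 0) :
    ∫ x in Ω, divergence (energyFlux Φ u t) x ∂μ = 0 :=
  setIntegral_divergence_eq_zero μ hΩ (contDiff_energyFlux hΦ hu)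
    (hasCompactSupport_energyFlux hK hsupp) fun x hx => by simp [energyFlux, hbdry x hx]

theorem stmt_15_general (μ : Measure E) [μ.IsAddHaarMeasure] (hΩ : IsOpen Ω) {a : E → ℝ}
    (ha : ContinuousOn a (closure Ω)) (hΦ : ContDiff ℝ 1 (uncurry Φ))
    (hΦt : ∀ x ∈ closure Ω, deriv (Φ x) t ≠ 0) (hu : ContDiff ℝ 2 (uncurry u))
    (hwave : ∀ x ∈ Ω,
      deriv (deriv (u x)) t - Δ (fun y => u y t) x + a x * deriv (u x) t = 0)
    (hbdry : ∀ x ∈ frontier Ω, deriv (u x) t = 0) (hK : IsCompact K)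
    (hsupp : ∀ᶠ s in 𝓝 t, ∀ x ∉ K, u x s = 0) :
    HasDerivAt (fun s => ∫ x in Ω, (‖∇ (fun y => u y s) x‖ ^ 2 + deriv (u x) s ^ 2) * Φ x s ∂μ)
      ((∫ x in Ω, (deriv (Φ x) t)⁻¹ * ‖deriv (Φ x) t • ∇ (fun y => u y t) x
          - deriv (u x) t • ∇ (fun y => Φ y t) x‖ ^ 2 ∂μ)
        + ∫ x in Ω, (-2 * a x * Φ x t + deriv (Φ x) t
          - (deriv (Φ x) t)⁻¹ * ‖∇ (fun y => Φ y t) x‖ ^ 2) * deriv (u x) t ^ 2 ∂μ) t := by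
  have hu₁ : ContDiff ℝ 1 (uncurry u) := hu.of_le one_le_two
  have hflux : IntegrableOn (divergence (energyFlux Φ u t)) Ω μ :=
    ((continuous_divergence (contDiff_energyFlux hΦ hu)).integrable_of_hasCompactSupport
      (hasCompactSupport_divergence
        (hasCompactSupport_energyFlux hK hsupp.self_of_nhds))).integrableOn
  have hsquare := integrableOn_inv_mul_norm_smul_sub_smul_sq μ hΩ.measurableSet hΦ hΦt hu₁ hK hsupp
  have hdamping := integrableOn_mul_deriv_sq μ hΩ.measurableSet ha hΦ hΦt hu₁ hK hsupp
  refine (hasDerivAt_setIntegral_energyDensity μ hΦ hu hK hsupp).congr_deriv ?_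
  rw [setIntegral_congr_fun hΩ.measurableSet fun x hx =>
      deriv_energyDensity_eq hΦ hu (hΦt x (subset_closure hx)) (hwave x hx),
    integral_add (hflux.const_mul 2) (hsquare.fun_add hdamping), integral_add hsquare hdamping,
    integral_const_mul, setIntegral_divergence_energyFlux_eq_zero μ hΩ hΦ hu hK
      hsupp.self_of_nhds hbdry, mul_zero, zero_add]

end Energy

/-- the first weighted energy identity (Lemma 4.2 of the paper):
`d/dt ∫_Ω (|∇u|² + u_t²) Φ dx
  = ∫_Ω (∂_tΦ)⁻¹ |(∂_tΦ)∇u − u_t ∇Φ|² dx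
    + ∫_Ω (−2aΦ + ∂_tΦ − (∂_tΦ)⁻¹|∇Φ|²) u_t² dx`. -/
theorem stmt_15 (N : ℕ) (Ω : Set (EuclideanSpace ℝ (Fin N)))
    (hΩopen : IsOpen Ω) (hΩbdry : HasSmoothBoundary Ω)
    (a : EuclideanSpace ℝ (Fin N) → ℝ) (ha : ContinuousOn a (closure Ω))
    (hapos : ∀ x ∈ closure Ω, 0 ≤ a x)
    (Φ : EuclideanSpace ℝ (Fin N) → ℝ → ℝ)
    (hΦ : ContDiff ℝ 2 (Function.uncurry Φ))
    (hΦpos : ∀ x ∈ closure Ω, ∀ t ≥ (0 : ℝ), 0 < Φ x t)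
    (hΦt : ∀ x ∈ closure Ω, ∀ t ≥ (0 : ℝ), deriv (Φ x) t < 0)
    (u : EuclideanSpace ℝ (Fin N) → ℝ → ℝ)
    (hu : ContDiff ℝ 2 (Function.uncurry u))
    (hupde : ∀ x ∈ Ω, ∀ t > (0 : ℝ),
      deriv (deriv (u x)) t - lap (fun y => u y t) x + a x * deriv (u x) t = 0)
    (hubdry : ∀ x ∈ frontier Ω, ∀ t > (0 : ℝ), u x t = 0)
    (husupp : ∀ T > (0 : ℝ), ∃ R > (0 : ℝ), ∀ t ∈ Set.Icc (0 : ℝ) T,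
      tsupport (fun x => u x t) ⊆ Metric.ball (0 : EuclideanSpace ℝ (Fin N)) R) :
    ∀ t > (0 : ℝ),
      HasDerivAt
        (fun s => ∫ x in Ω,
          (‖gradient (fun y => u y s) x‖ ^ 2 + (deriv (u x) s) ^ 2) * Φ x s)
        ((∫ x in Ω, (deriv (Φ x) t)⁻¹
            * ‖(deriv (Φ x) t) • gradient (fun y => u y t) x
                - (deriv (u x) t) • gradient (fun y => Φ y t) x‖ ^ 2)
          + ∫ x in Ω,
            (-2 * a x * Φ x t + deriv (Φ x) t
              - (deriv (Φ x) t)⁻¹ * ‖gradient (fun y => Φ y t) x‖ ^ 2)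
              * (deriv (u x) t) ^ 2)
        t := by
  intro t ht
  obtain ⟨R, -, hR⟩ := husupp (t + 1) (by positivity)
  refine stmt_15_general volume hΩopen ha (hΦ.of_le one_le_two)
    (fun x hx => (hΦt x hx t ht.le).ne) hu (fun x hx => ?wave) (fun x hx => ?boundary)
    (isCompact_closedBall 0 R) ?support
  case wave =>
    rw [← lap_eq_laplacian (contDiff_of_uncurry_right hu t)]
    exact hupde x hx t ht
  case boundary =>
    have hzero : u x =ᶠ[𝓝 t] fun _ => 0 := (eventually_gt_nhds ht).mono (hubdry x hx)
    rw [hzero.deriv_eq, deriv_const]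
  case support =>
    filter_upwards [Ioo_mem_nhds ht (lt_add_one t)] with s hs x hx
    exact image_eq_zero_of_notMem_tsupport (f := fun y => u y s) fun hxs =>
      hx (Metric.ball_subset_closedBall (hR s (Ioo_subset_Icc_self hs) hxs))
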